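/- Assume |x·g'(x)| ≤ C₂|g(x)| and |x·f'(x)| ≤ C₃ for all x ≤ −3/2. Let h : ℝ → ℝ be smooth with h, 1/h, h' and h'' bounded and with |x·h'(x)| ≤ C₆ and |x²·h''(x)| ≤ C₇ for x ≤ −3/2, and let V : ℝ → (Hermitian 4×4 complex matrices) be C¹ with V bounded and |x·V'(x)| ≤ C₈ for x ≤ −3/2. Define, on Schwartz functions, Hu = h·H₀(hu) + Vu and the operator Bu = h·[H₀, A₋](hu) + i·h·H₀(R₋h'·u) + i·R₋h'·H₀(hu) + i·R₋V'·u, where [H₀, A₋] denotes the explicit commutator [H₀, A₋]v = −i(Γ¹R₋'Dv − (i/2)Γ¹R₋''v − λR₋g'Γ²v − R₋f'v). Then B coincides with the commutator [H, A₋] on Schwartz functions, and there exists a constant c > 0, uniform in λ ≥ 1, such that for every u in the Schwartz space 𝒮(ℝ, ℂ⁴): ‖Bu‖ ≤ c(‖H₀u‖ + ‖u‖). -/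

import Mathlib

noncomputable section

open MeasureTheory

abbrev V4 : Type := EuclideanSpace ℂ (Fin 4)

/-- A `4 × 4` complex matrix acting on `ℂ⁴` as a continuous linear map. -/
def Mop (A : Matrix (Fin 4) (Fin 4) ℂ) : V4 →L[ℂ] V4 := Matrix.toEuclideanCLM (𝕜 := ℂ) A

/-- The `L²` inner product `⟨u, v⟩ = ∫ ⟨u(x), v(x)⟩ dx` (conjugate-linear in the first slot). -/
def L2inner (u v : ℝ → V4) : ℂ := ∫ x : ℝ, (inner ℂ (u x) (v x) : ℂ)

/-- The `L²` norm `‖u‖ = (∫ ‖u(x)‖² dx)^{1/2}`. -/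
def L2norm (u : ℝ → V4) : ℝ := Real.sqrt (∫ x : ℝ, ‖u x‖ ^ 2)

/-- The operator `D = −i d/dx`. -/
def Dop (u : ℝ → V4) : ℝ → V4 := fun x => (-Complex.I) • deriv u x

/-- The per-mode free Dirac Hamiltonian `H₀u = Γ¹Du + λgΓ²u + fu`. -/
def H0op (Γ1 Γ2 : Matrix (Fin 4) (Fin 4) ℂ) (g f : ℝ → ℝ) (lam : ℝ) (u : ℝ → V4) : ℝ → V4 :=
  fun x => Mop Γ1 (Dop u x) + (lam * g x) • Mop Γ2 (u x) + f x • u x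

/-- The operator `Qu = −u'' + λ²g²u`. -/
def Qop (g : ℝ → ℝ) (lam : ℝ) (u : ℝ → V4) : ℝ → V4 :=
  fun x => -(deriv (deriv u) x) + (lam ^ 2 * g x ^ 2) • u x

/-- The comparison operator `Nu = Qu + (1 + x²)u`. -/
def Nop (g : ℝ → ℝ) (lam : ℝ) (u : ℝ → V4) : ℝ → V4 :=
  fun x => Qop g lam u x + (1 + x ^ 2) • u x

/-- The coefficient `R₋(x) = j₋(x/S)² · x` of the conjugate operator at the double horizon. -/
def Rm (jm : ℝ → ℝ) (S : ℝ) (x : ℝ) : ℝ := (jm (x / S)) ^ 2 * x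

/-- The conjugate operator at the double horizon, `A₋u = R₋Du − (i/2)R₋'u = ½{R₋, D}u`. -/
def Amop (jm : ℝ → ℝ) (S : ℝ) (u : ℝ → V4) : ℝ → V4 :=
  fun x => Rm jm S x • Dop u x - ((Complex.I / 2) * ((deriv (Rm jm S) x : ℝ) : ℂ)) • u x

/-- The commutator `[H₀, A₋] = −i(Γ¹R₋'D − (i/2)Γ¹R₋'' − λR₋g'Γ² − R₋f')` computed on
Schwartz functions. -/
def commH0Am (Γ1 Γ2 : Matrix (Fin 4) (Fin 4) ℂ) (g f : ℝ → ℝ) (lam : ℝ)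
    (jm : ℝ → ℝ) (S : ℝ) (u : ℝ → V4) : ℝ → V4 :=
  fun x =>
    (-Complex.I) •
      (deriv (Rm jm S) x • Mop Γ1 (Dop u x)
        - ((Complex.I / 2) * ((deriv (deriv (Rm jm S)) x : ℝ) : ℂ)) • Mop Γ1 (u x)
        - (lam * Rm jm S x * deriv g x) • Mop Γ2 (u x)
        - (Rm jm S x * deriv f x) • u x)

/-- The perturbed Hamiltonian `Hu = h·H₀(hu) + Vu`. -/
def Hop (Γ1 Γ2 : Matrix (Fin 4) (Fin 4) ℂ) (g f : ℝ → ℝ) (lam : ℝ) (h : ℝ → ℝ)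
    (V : ℝ → Matrix (Fin 4) (Fin 4) ℂ) (u : ℝ → V4) : ℝ → V4 :=
  fun x => h x • H0op Γ1 Γ2 g f lam (fun y => h y • u y) x + Mop (V x) (u x)

/-- The operator `Bu = h·[H₀, A₋](hu) + i·h·H₀(R₋h'·u) + i·R₋h'·H₀(hu) + i·R₋V'·u`. -/
def Bop (Γ1 Γ2 : Matrix (Fin 4) (Fin 4) ℂ) (g f : ℝ → ℝ) (lam : ℝ) (h : ℝ → ℝ)
    (V : ℝ → Matrix (Fin 4) (Fin 4) ℂ) (jm : ℝ → ℝ) (S : ℝ) (u : ℝ → V4) : ℝ → V4 :=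
  fun x =>
    h x • commH0Am Γ1 Γ2 g f lam jm S (fun y => h y • u y) x
      + (Complex.I * (h x : ℂ)) •
          H0op Γ1 Γ2 g f lam (fun y => (Rm jm S y * deriv h y) • u y) x
      + (Complex.I * ((Rm jm S x * deriv h x : ℝ) : ℂ)) •
          H0op Γ1 Γ2 g f lam (fun y => h y • u y) x
      + (Complex.I * ((Rm jm S x : ℝ) : ℂ)) • (deriv (fun y => Mop (V y)) x) (u x)

lemma H0_of (Γ1 Γ2 : Matrix (Fin 4) (Fin 4) ℂ) (g f : ℝ → ℝ) (lam : ℝ) {w : ℝ → V4} {w' : V4} {x : ℝ}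
    (hw : HasDerivAt w w' x) : H0op Γ1 Γ2 g f lam w x =
      Mop Γ1 ((-Complex.I) • w') + (lam * g x) • Mop Γ2 (w x) + f x • w x := by
  simp only [H0op, Dop, hw.deriv]

lemma commH_of (Γ1 Γ2 : Matrix (Fin 4) (Fin 4) ℂ) (g f : ℝ → ℝ) (lam : ℝ) (jm : ℝ → ℝ) (S : ℝ) {w : ℝ → V4} {w' : V4} {x : ℝ}
    (hw : HasDerivAt w w' x) : commH0Am Γ1 Γ2 g f lam jm S w x =
    (-Complex.I) •
      (deriv (Rm jm S) x • Mop Γ1 ((-Complex.I) • w')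
        - ((Complex.I / 2) * ((deriv (deriv (Rm jm S)) x : ℝ) : ℂ)) • Mop Γ1 (w x)
        - (lam * Rm jm S x * deriv g x) • Mop Γ2 (w x)
        - (Rm jm S x * deriv f x) • w x) := by
  simp only [commH0Am, Dop, hw.deriv]

lemma Am_of (jm : ℝ → ℝ) (S : ℝ) {w : ℝ → V4} {w' : V4} {x : ℝ}
    (hw : HasDerivAt w w' x) : Amop jm S w x =
    Rm jm S x • ((-Complex.I) • w') - ((Complex.I / 2) * ((deriv (Rm jm S) x : ℝ) : ℂ)) • w x := by
  simp only [Amop, Dop, hw.deriv]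

lemma smooth_deriv {a : ℝ → ℝ} (ha : ContDiff ℝ (⊤ : ℕ∞) a) : ContDiff ℝ (⊤ : ℕ∞) (deriv a) :=
  (contDiff_infty_iff_deriv.1 ha).2

lemma smooth_hd {a : ℝ → ℝ} (ha : ContDiff ℝ (⊤ : ℕ∞) a) (x : ℝ) : HasDerivAt a (deriv a x) x :=
  ((ha.differentiable (by simp)) x).hasDerivAt

lemma schw_hd (u : SchwartzMap ℝ V4) (x : ℝ) : HasDerivAt u (deriv u x) x :=
  (u.differentiable x).hasDerivAt

lemma schw_hd2 (u : SchwartzMap ℝ V4) (x : ℝ) : HasDerivAt (deriv u) (deriv (deriv u) x) x := by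
  have : deriv u = SchwartzMap.derivCLM ℝ V4 u := by ext; simp
  rw [this]
  exact schw_hd (SchwartzMap.derivCLM ℝ V4 u) x

lemma Rm_smooth {jm : ℝ → ℝ} (hj : ContDiff ℝ (⊤ : ℕ∞) jm) (S : ℝ) :
    ContDiff ℝ (⊤ : ℕ∞) (Rm jm S) := by
  unfold Rm
  exact ((hj.comp (contDiff_id.div_const S)).pow 2).mul contDiff_id

lemma comm_eq (Γ1 Γ2 : Matrix (Fin 4) (Fin 4) ℂ) {g f h : ℝ → ℝ}
    (hg : ContDiff ℝ (⊤ : ℕ∞) g) (hf : ContDiff ℝ (⊤ : ℕ∞) f) (hh : ContDiff ℝ (⊤ : ℕ∞) h)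
    (V : ℝ → Matrix (Fin 4) (Fin 4) ℂ) (hV : ContDiff ℝ 1 fun x => Mop (V x))
    {jm : ℝ → ℝ} (hj : ContDiff ℝ (⊤ : ℕ∞) jm) (S lam : ℝ) (u : SchwartzMap ℝ V4) (x : ℝ) :
      Bop Γ1 Γ2 g f lam h V jm S ⇑u x =
        Hop Γ1 Γ2 g f lam h V (Amop jm S ⇑u) x
          - Amop jm S (Hop Γ1 Γ2 g f lam h V ⇑u) x := by
  have hR := Rm_smooth hj S
  have hd := smooth_hd hh
  have hd2 := smooth_hd (smooth_deriv hh)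
  have Rd := smooth_hd hR
  have Rd2 := smooth_hd (smooth_deriv hR)
  have ud := schw_hd u
  have ud2 := schw_hd2 u
  have hu : ∀ y, HasDerivAt (fun y => h y • u y) (h y • deriv u y + deriv h y • u y) y :=
    fun y => (hd y).smul (ud y)
  have hRu : HasDerivAt (fun y => (Rm jm S y * deriv h y) • u y) _ x :=
    ((Rd x).mul (hd2 x)).smul (ud x)
  have hA : Amop jm S u = fun y => Rm jm S y • ((-Complex.I) • deriv u y)
      - ((Complex.I / 2) * ((deriv (Rm jm S) y : ℝ) : ℂ)) • u y := by
    ext1 y; exact Am_of jm S (ud y)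
  have hAd : HasDerivAt (Amop jm S u) _ x :=
    HasDerivAt.congr_of_eventuallyEq (((Rd x).smul ((ud2 x).const_smul (-Complex.I))).sub
      ((((Rd2 x).ofReal_comp).const_mul (Complex.I / 2)).smul (ud x))) (Filter.EventuallyEq.of_eq hA)
  have hhA : HasDerivAt (fun y => h y • Amop jm S u y) _ x := (hd x).smul hAd
  have hVd : HasDerivAt (fun y => Mop (V y)) (deriv (fun y => Mop (V y)) x) x :=
    ((hV.differentiable (by simp)) x).hasDerivAt
  have hVu : HasDerivAt (fun y => Mop (V y) (u y))
     ((deriv (fun y => Mop (V y)) x) (u x) + Mop (V x) (deriv u x)) x := by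
    have := ((ContinuousLinearMap.restrictScalarsL ℂ V4 V4 ℝ ℝ).hasFDerivAt.comp_hasDerivAt x hVd).clm_apply (ud x)
    exact this
  have hH : Hop Γ1 Γ2 g f lam h V u = fun y => h y •
      (Mop Γ1 ((-Complex.I) • (h y • deriv u y + deriv h y • u y)) + (lam * g y) • Mop Γ2 (h y • u y) + f y • (h y • u y))
      + Mop (V y) (u y) := by
    ext1 y; simp only [Hop]; rw [H0_of _ _ _ _ _ (hu y)]
  have key : ∀ (T : V4 →L[ℂ] V4) {w : ℝ → V4} {w' : V4}, HasDerivAt w w' x →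
     HasDerivAt (fun y => T (w y)) (T w') x := fun T w w' hw =>
     (T.restrictScalars ℝ).hasFDerivAt.comp_hasDerivAt x hw
  have hHd : HasDerivAt (Hop Γ1 Γ2 g f lam h V u) _ x :=
    HasDerivAt.congr_of_eventuallyEq (((hd x).smul (((key (Mop Γ1) ((((hd x).smul (ud2 x)).add ((hd2 x).smul (ud x))).const_smul (-Complex.I))).add
      (((smooth_hd hg x).const_mul lam).smul (key (Mop Γ2) (hu x)))).add ((smooth_hd hf x).smul (hu x)))).add hVu) (Filter.EventuallyEq.of_eq hH)
  rw [Am_of jm S hHd, hH]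
  simp only [Hop]
  rw [H0_of _ _ _ _ _ hhA, hA]
  simp only [Bop]
  rw [H0_of _ _ _ _ _ hRu, H0_of _ _ _ _ _ (hu x), commH_of _ _ _ _ _ _ _ (hu x)]
  simp only [← Complex.coe_smul, map_add, map_sub, map_smul, Complex.ofReal_mul, Pi.mul_apply, Pi.add_apply, Pi.smul_apply, Pi.smul_apply']
  match_scalars <;> ring_nf

lemma Mop_norm {Γ : Matrix (Fin 4) (Fin 4) ℂ} (hh : Γ.IsHermitian) (hs : Γ * Γ = 1) (v : V4) :
    ‖Mop Γ v‖ = ‖v‖ := by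
  have hst : star (Mop Γ) = Mop Γ := by
    unfold Mop
    rw [← map_star, Matrix.star_eq_conjTranspose, hh.eq]
  have hm : Mop Γ * Mop Γ = 1 := by
    unfold Mop
    rw [← map_mul, hs, map_one]
  have h1 : inner ℂ (Mop Γ v) (Mop Γ v) = inner ℂ v v := by
    conv_lhs => rw [← hst]
    rw [ContinuousLinearMap.star_eq_adjoint, ContinuousLinearMap.adjoint_inner_left,
      ← ContinuousLinearMap.star_eq_adjoint, hst, ← mul_apply_eq_comp, hm]
    rfl
  rw [@norm_eq_sqrt_re_inner ℂ, h1, ← @norm_eq_sqrt_re_inner ℂ]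

lemma Mop_symm {Γ : Matrix (Fin 4) (Fin 4) ℂ} (hh : Γ.IsHermitian) (v w : V4) :
    inner ℂ (Mop Γ v) w = inner ℂ v (Mop Γ w) := by
  have hst : star (Mop Γ) = Mop Γ := by
    unfold Mop
    rw [← map_star, Matrix.star_eq_conjTranspose, hh.eq]
  conv_lhs => rw [← hst]
  rw [ContinuousLinearMap.star_eq_adjoint, ContinuousLinearMap.adjoint_inner_left]

lemma deriv_schw (u : SchwartzMap ℝ V4) : deriv u = SchwartzMap.derivCLM ℝ V4 u := by ext; simp

lemma schw_int (u : SchwartzMap ℝ V4) : Integrable (fun x => ‖u x‖ ^ 2) :=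
  MemLp.integrable_norm_pow (p := 2) (u.memLp _) (by norm_num)

lemma schw_int' (u : SchwartzMap ℝ V4) : Integrable (fun x => ‖deriv u x‖ ^ 2) := by
  rw [deriv_schw]; exact schw_int _

lemma schw_int_g (u : SchwartzMap ℝ V4) {g : ℝ → ℝ} (hg : Continuous g) {Cb : ℝ}
    (hb : ∀ x, |g x| ≤ Cb) : Integrable (fun x => g x * ‖u x‖ ^ 2) :=
  (schw_int u).bdd_mul hg.aestronglyMeasurable (Filter.Eventually.of_forall hb)

/-- the cross term identity -/
lemma energy (Γ1 Γ2 : Matrix (Fin 4) (Fin 4) ℂ)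
    (h1 : Γ1.IsHermitian) (h2 : Γ2.IsHermitian)
    (s1 : Γ1 * Γ1 = 1) (s2 : Γ2 * Γ2 = 1)
    (ac : Γ1 * Γ2 + Γ2 * Γ1 = 0)
    {g : ℝ → ℝ} (hg : ContDiff ℝ (⊤ : ℕ∞) g) {Cb : ℝ} (hgb : ∀ x : ℝ, |g x| ≤ Cb)
    {Cg : ℝ} (hCg : 0 < Cg) (hg' : ∀ x : ℝ, |deriv g x| ≤ Cg * |g x|)
    {f : ℝ → ℝ} (hf : ContDiff ℝ (⊤ : ℕ∞) f)
    {Mf : ℝ} (hfb : ∀ x : ℝ, |f x| ≤ Mf) {lam : ℝ} (hl : 1 ≤ lam) (u : SchwartzMap ℝ V4) :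
    (∫ x, ‖deriv u x‖ ^ 2) + (∫ x, lam ^ 2 * (g x ^ 2 * ‖u x‖ ^ 2)) ≤
      4 * (∫ x, ‖H0op Γ1 Γ2 g f lam u x‖ ^ 2) + (4 * Mf ^ 2 + Cg ^ 2) * ∫ x, ‖u x‖ ^ 2 := by
  have hMf : 0 ≤ Mf := (abs_nonneg _).trans (hfb 0)
  have hCb : 0 ≤ Cb := (abs_nonneg _).trans (hgb 0)
  have ud := schw_hd u
  have gd := smooth_hd hg
  have iu := schw_int u
  have iu' := schw_int' u
  have ig2 : Integrable (fun x => g x ^ 2 * ‖u x‖ ^ 2) :=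
    schw_int_g u (hg.continuous.pow 2) (Cb := Cb ^ 2) (fun x => by
      rw [abs_pow]; exact pow_le_pow_left₀ (abs_nonneg _) (hgb x) 2)
  have ig2l := ig2.const_mul (lam ^ 2)
  have cu' : Continuous (deriv u) := by rw [deriv_schw]; exact SchwartzMap.continuous _
  have cH : Continuous (H0op Γ1 Γ2 g f lam u) := by
    unfold H0op Dop
    have := hg.continuous
    have := hf.continuous
    have := u.continuous
    fun_prop
  have n1 := Mop_norm h1 s1
  have n2 := Mop_norm h2 s2
  have iH : Integrable (fun x => ‖H0op Γ1 Γ2 g f lam u x‖ ^ 2) := by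
    refine Integrable.mono' (((iu'.add ig2l).add (iu.const_mul (Mf ^ 2))).const_mul 3)
      (cH.norm.pow 2).aestronglyMeasurable (Filter.Eventually.of_forall fun x => ?_)
    simp only [Pi.add_apply, norm_pow, norm_norm]
    have b : ‖H0op Γ1 Γ2 g f lam u x‖ ≤ ‖deriv u x‖ + |lam * g x| * ‖u x‖ + Mf * ‖u x‖ := by
      unfold H0op Dop
      refine (norm_add₃_le).trans ?_
      rw [n1, norm_smul, norm_smul, norm_smul, n2]
      have := mul_le_mul_of_nonneg_right (hfb x) (norm_nonneg (u x))
      simp only [norm_neg, Complex.norm_I, one_mul, Real.norm_eq_abs]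
      linarith
    have b2 := pow_le_pow_left₀ (norm_nonneg _) b 2
    have e : lam ^ 2 * (g x ^ 2 * ‖u x‖ ^ 2) = (|lam * g x| * ‖u x‖) ^ 2 := by
      rw [mul_pow, sq_abs]; ring
    rw [e]
    generalize |lam * g x| * ‖u x‖ = t at *
    nlinarith [sq_nonneg (‖deriv u x‖ - t), sq_nonneg (‖deriv u x‖ - Mf * ‖u x‖), sq_nonneg (t - Mf * ‖u x‖)]
  -- W = H0 u - f u
  set W : ℝ → V4 := fun x => (-Complex.I) • Mop Γ1 (deriv u x) + (lam * g x) • Mop Γ2 (u x) with hW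
  have HW : ∀ x, H0op Γ1 Γ2 g f lam u x = W x + f x • u x := by
    intro x; simp only [H0op, Dop, hW, map_smul]
  have cW : Continuous W := by
    have := hg.continuous
    have := u.continuous
    fun_prop
  have Wle : ∀ x, ‖W x‖ ^ 2 ≤ 2 * ‖H0op Γ1 Γ2 g f lam u x‖ ^ 2 + 2 * Mf ^ 2 * ‖u x‖ ^ 2 := by
    intro x
    have e : W x = H0op Γ1 Γ2 g f lam u x - f x • u x := by rw [HW]; abel
    have b : ‖W x‖ ≤ ‖H0op Γ1 Γ2 g f lam u x‖ + Mf * ‖u x‖ := by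
      rw [e]; refine (norm_sub_le _ _).trans ?_
      rw [norm_smul]
      have := mul_le_mul_of_nonneg_right (hfb x) (norm_nonneg (u x))
      simp only [Real.norm_eq_abs]; linarith
    have b2 := pow_le_pow_left₀ (norm_nonneg _) b 2
    nlinarith [sq_nonneg (‖H0op Γ1 Γ2 g f lam u x‖ - Mf * ‖u x‖)]
  have iW : Integrable (fun x => ‖W x‖ ^ 2) := by
    refine Integrable.mono' ((iH.const_mul 2).add (iu.const_mul (2 * Mf ^ 2)))
      (cW.norm.pow 2).aestronglyMeasurable (Filter.Eventually.of_forall fun x => ?_)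
    simp only [Pi.add_apply, norm_pow, norm_norm]
    exact Wle x
  -- quadratic form
  set q : ℝ → ℝ := fun x => (Complex.I * inner ℂ (Mop Γ1 (u x)) (Mop Γ2 (u x))).re with hq
  have key : ∀ (T : V4 →L[ℂ] V4) (x : ℝ), HasDerivAt (fun y => T (u y)) (T (deriv u x)) x :=
    fun T x => (T.restrictScalars ℝ).hasFDerivAt.comp_hasDerivAt x (ud x)
  have qd : ∀ x, HasDerivAt q (2 * (Complex.I * inner ℂ (Mop Γ1 (deriv u x)) (Mop Γ2 (u x))).re) x := by
    intro x
    have d1 := ((key (Mop Γ1) x).inner ℂ (key (Mop Γ2) x)).const_mul Complex.I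
    have d2 := (Complex.reCLM.hasFDerivAt.comp_hasDerivAt x d1)
    refine d2.congr_deriv ?_
    have e1 : inner ℂ (Mop Γ1 (u x)) (Mop Γ2 (deriv u x)) =
        - (starRingEnd ℂ) (inner ℂ (Mop Γ1 (deriv u x)) (Mop Γ2 (u x))) := by
      rw [inner_conj_symm, Mop_symm h1, Mop_symm h2, ← inner_neg_right]
      congr 1
      have : Mop Γ1 * Mop Γ2 + Mop Γ2 * Mop Γ1 = 0 := by
        unfold Mop
        rw [← map_mul, ← map_mul, ← map_add, ac, map_zero]
      have := congrArg (fun T : V4 →L[ℂ] V4 => T (deriv u x)) this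
      exact eq_neg_of_add_eq_zero_left this
    rw [e1]
    simp only [Complex.reCLM_apply, Complex.mul_re, Complex.add_re, Complex.add_im, Complex.neg_re,
      Complex.neg_im, Complex.conj_re, Complex.conj_im, Complex.I_re, Complex.I_im]
    ring
  have qb : ∀ x, |q x| ≤ ‖u x‖ ^ 2 := by
    intro x
    refine (Complex.abs_re_le_norm _).trans ?_
    rw [norm_mul, Complex.norm_I, one_mul]
    refine (norm_inner_le_norm _ _).trans ?_
    rw [n1, n2, sq]
  have cq : Continuous q := continuous_iff_continuousAt.2 fun x => (qd x).continuousAt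
  have Wid : ∀ x, ‖W x‖ ^ 2 = ‖deriv u x‖ ^ 2 + lam ^ 2 * (g x ^ 2 * ‖u x‖ ^ 2) +
      lam * (g x * (2 * (Complex.I * inner ℂ (Mop Γ1 (deriv u x)) (Mop Γ2 (u x))).re)) := by
    intro x
    simp only [hW]
    rw [@norm_add_sq ℂ, norm_smul, norm_smul, n1, n2, ← Complex.coe_smul, inner_smul_left, inner_smul_right]
    simp only [norm_neg, Complex.norm_I, one_mul, Real.norm_eq_abs, mul_pow, sq_abs, map_neg, Complex.conj_I, neg_neg]
    simp only [RCLike.re_to_complex, Complex.mul_re, Complex.mul_im, Complex.I_re, Complex.I_im, Complex.ofReal_re, Complex.ofReal_im]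
    ring
  -- the total derivative
  have Fd : ∀ x, HasDerivAt (fun x => lam * (g x * q x)) ((‖W x‖ ^ 2 - ‖deriv u x‖ ^ 2 - lam ^ 2 * (g x ^ 2 * ‖u x‖ ^ 2)) + lam * (deriv g x * q x)) x := by
    intro x
    refine (((gd x).mul (qd x)).const_mul lam).congr_deriv ?_
    rw [Wid]; ring
  have ig'q : Integrable (fun x => lam * (deriv g x * q x)) := by
    refine Integrable.mono' (iu.const_mul (lam * (Cg * Cb))) ?_ (Filter.Eventually.of_forall fun x => ?_)
    · exact (continuous_const.mul ((smooth_deriv hg).continuous.mul cq)).aestronglyMeasurable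
    · rw [Real.norm_eq_abs, abs_mul, abs_mul, abs_of_pos (by linarith : 0 < lam), mul_assoc]
      have := (hg' x).trans (mul_le_mul_of_nonneg_left (hgb x) hCg.le)
      gcongr
      exact qb x
  have igq : Integrable (fun x => lam * (g x * q x)) := by
    refine Integrable.mono' (iu.const_mul (lam * Cb)) ?_ (Filter.Eventually.of_forall fun x => ?_)
    · exact (continuous_const.mul (hg.continuous.mul cq)).aestronglyMeasurable
    · rw [Real.norm_eq_abs, abs_mul, abs_mul, abs_of_pos (by linarith : 0 < lam), mul_assoc]
      have := hgb x
      gcongr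
      exact qb x
  have z := integral_eq_zero_of_hasDerivAt_of_integrable Fd (((iW.sub iu').sub ig2l).add ig'q) igq
  have j1 : Integrable (fun x => ‖W x‖ ^ 2 - ‖deriv u x‖ ^ 2) := iW.sub iu'
  have j2 : Integrable (fun x => ‖W x‖ ^ 2 - ‖deriv u x‖ ^ 2 - lam ^ 2 * (g x ^ 2 * ‖u x‖ ^ 2)) := j1.sub ig2l
  rw [integral_add j2 ig'q, integral_sub j1 ig2l, integral_sub iW iu'] at z
  have b1 : ∫ x, ‖W x‖ ^ 2 ≤ 2 * (∫ x, ‖H0op Γ1 Γ2 g f lam u x‖ ^ 2) + 2 * Mf ^ 2 * ∫ x, ‖u x‖ ^ 2 := by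
    rw [← integral_const_mul, ← integral_const_mul, ← integral_add (iH.const_mul _) (iu.const_mul _)]
    exact integral_mono iW ((iH.const_mul _).add (iu.const_mul _)) Wle
  have b2 : ∫ x, lam * (deriv g x * q x) ≤ 1 / 2 * (∫ x, lam ^ 2 * (g x ^ 2 * ‖u x‖ ^ 2)) + Cg ^ 2 / 2 * ∫ x, ‖u x‖ ^ 2 := by
    rw [← integral_const_mul, ← integral_const_mul, ← integral_add (ig2l.const_mul _) (iu.const_mul _)]
    refine integral_mono ig'q ((ig2l.const_mul _).add (iu.const_mul _)) fun x => ?_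
    simp only
    have a1 : lam * (deriv g x * q x) ≤ lam * ((Cg * |g x|) * ‖u x‖ ^ 2) := by
      refine mul_le_mul_of_nonneg_left ?_ (by linarith)
      refine (le_abs_self _).trans ?_
      rw [abs_mul]
      exact mul_le_mul (hg' x) (qb x) (abs_nonneg _) (by positivity)
    refine a1.trans ?_
    have : 0 ≤ (lam * |g x| - Cg) ^ 2 * ‖u x‖ ^ 2 := by positivity
    have e : g x ^ 2 = |g x| ^ 2 := (sq_abs _).symm
    rw [e]
    nlinarith
  have p : 0 ≤ ∫ x, ‖deriv u x‖ ^ 2 := integral_nonneg fun x => by positivity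
  linarith

lemma H0_bound {Γ1 Γ2 : Matrix (Fin 4) (Fin 4) ℂ}
    (n1 : ∀ v, ‖Mop Γ1 v‖ = ‖v‖) (n2 : ∀ v, ‖Mop Γ2 v‖ = ‖v‖) {g f : ℝ → ℝ}
    {Mf : ℝ} (hfb : ∀ x : ℝ, |f x| ≤ Mf) {lam : ℝ} (hl : 1 ≤ lam)
    {w : ℝ → V4} {w' : V4} {x : ℝ} (hw : HasDerivAt w w' x) {a b p q : ℝ} (ha : 0 ≤ a) (hb : 0 ≤ b)
    (hp : 0 ≤ p) (hq : 0 ≤ q) (b0 : ‖w x‖ ≤ a * q) (b1 : ‖w'‖ ≤ a * p + b * q) :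
    ‖H0op Γ1 Γ2 g f lam w x‖ ≤ (a + b + Mf * a) * (p + lam * |g x| * q + q) := by
  rw [H0_of _ _ _ _ _ hw]
  refine (norm_add₃_le).trans ?_
  rw [n1, norm_smul, norm_smul, norm_smul, n2]
  simp only [norm_neg, Complex.norm_I, one_mul, Real.norm_eq_abs, abs_mul]
  rw [abs_of_pos (by linarith : 0 < lam)]
  have hMf : 0 ≤ Mf := (abs_nonneg _).trans (hfb 0)
  have hG : 0 ≤ lam * |g x| := by positivity
  have t1 : lam * |g x| * ‖w x‖ ≤ lam * |g x| * (a * q) := by gcongr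
  have t2 : |f x| * ‖w x‖ ≤ Mf * (a * q) := mul_le_mul (hfb x) b0 (norm_nonneg _) hMf
  generalize lam * |g x| = G at *
  have : 0 ≤ a * q + b * p + b * (G * q) + Mf * a * (p + G * q) := by positivity
  nlinarith

lemma comm_bound {Γ1 Γ2 : Matrix (Fin 4) (Fin 4) ℂ}
    (n1 : ∀ v, ‖Mop Γ1 v‖ = ‖v‖) (n2 : ∀ v, ‖Mop Γ2 v‖ = ‖v‖) {g f : ℝ → ℝ}
    {jm : ℝ → ℝ} {S K1 K2 C2 C3 : ℝ} {lam : ℝ} (hl : 1 ≤ lam)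
    {w : ℝ → V4} {w' : V4} {x : ℝ}
    (k1 : |deriv (Rm jm S) x| ≤ K1) (k2 : |deriv (deriv (Rm jm S)) x| ≤ K2)
    (hC2 : 0 < C2) (k3 : |Rm jm S x * deriv g x| ≤ C2 * |g x|) (k4 : |Rm jm S x * deriv f x| ≤ C3)
    (hw : HasDerivAt w w' x) {a b p q : ℝ} (ha : 0 ≤ a) (hb : 0 ≤ b)
    (hp : 0 ≤ p) (hq : 0 ≤ q) (b0 : ‖w x‖ ≤ a * q) (b1 : ‖w'‖ ≤ a * p + b * q) :
    ‖commH0Am Γ1 Γ2 g f lam jm S w x‖ ≤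
      (K1 * (a + b) + K2 * a + C2 * a + C3 * a) * (p + lam * |g x| * q + q) := by
  rw [commH_of _ _ _ _ _ _ _ hw, norm_smul]
  have tri : ∀ A B C D : V4, ‖A - B - C - D‖ ≤ ‖A‖ + ‖B‖ + ‖C‖ + ‖D‖ := fun A B C D => by
    have := norm_sub_le (A - B - C) D
    have := norm_sub_le (A - B) C
    have := norm_sub_le A B
    linarith
  rw [norm_neg, Complex.norm_I, one_mul]
  refine (tri _ _ _ _).trans ?_
  rw [norm_smul, norm_smul, norm_smul, norm_smul, n1, n1, n2, norm_smul, mul_assoc lam]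
  simp only [norm_neg, Complex.norm_I, one_mul, Real.norm_eq_abs, norm_mul, norm_div, Complex.norm_real, Complex.norm_ofNat]
  simp only [abs_mul] at k3 k4
  rw [abs_of_pos (by linarith : 0 < lam)]
  have K1p := (abs_nonneg _).trans k1
  have K2p := (abs_nonneg _).trans k2
  have K4p := (by positivity : (0 : ℝ) ≤ |Rm jm S x| * |deriv f x|).trans k4
  have hG : 0 ≤ lam * |g x| := by positivity
  have t1 := mul_le_mul k1 b1 (norm_nonneg _) K1p
  have t2 := mul_le_mul k2 b0 (norm_nonneg _) K2p
  have t2' : 0 ≤ |deriv (deriv (Rm jm S)) x| * ‖w x‖ := by positivity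
  have t3 : lam * (|Rm jm S x| * |deriv g x|) * ‖w x‖ ≤ lam * (C2 * |g x|) * (a * q) := by gcongr
  have t4 := mul_le_mul k4 b0 (norm_nonneg _) K4p
  have e3 : lam * (C2 * |g x|) * (a * q) = C2 * a * (lam * |g x| * q) := by ring
  rw [e3] at t3
  generalize lam * |g x| = G at *
  have hGq := mul_nonneg hG hq
  have : 0 ≤ K1 * a * q + K1 * b * p + K1 * (a + b) * (G * q) + K2 * a * (p + G * q)
    + C2 * a * (p + q) + C3 * a * (p + G * q) := by positivity
  nlinarith

lemma Rm_bounds {jm : ℝ → ℝ} (hj : ContDiff ℝ (⊤ : ℕ∞) jm) {S : ℝ} (hS : 1 ≤ S)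
    (hjm_one : ∀ t : ℝ, t ≤ -2 → jm t = 1)
    (hjm_zero : ∀ t : ℝ, -(3 / 2 : ℝ) ≤ t → jm t = 0) :
    ∃ K1 K2 : ℝ, ∀ x, |deriv (Rm jm S) x| ≤ K1 ∧ |deriv (deriv (Rm jm S)) x| ≤ K2 := by
  have hR := Rm_smooth hj S
  have c1 := (smooth_deriv hR).continuous
  have c2 := (smooth_deriv (smooth_deriv hR)).continuous
  have S0 : 0 < S := by linarith
  have e1 : ∀ x < -2 * S, deriv (Rm jm S) x = 1 := by
    intro x hx
    have : Rm jm S =ᶠ[nhds x] id := by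
      filter_upwards [Iio_mem_nhds hx] with y hy
      have : y / S ≤ -2 := by rw [div_le_iff₀ S0]; exact le_of_lt hy
      simp [Rm, hjm_one _ this]
    rw [this.deriv_eq]; simp
  have e2 : ∀ x > -(3 / 2) * S, deriv (Rm jm S) x = 0 := by
    intro x hx
    have : Rm jm S =ᶠ[nhds x] fun _ => 0 := by
      filter_upwards [Ioi_mem_nhds hx] with y hy
      have : -(3 / 2) ≤ y / S := by rw [le_div_iff₀ S0]; exact le_of_lt hy
      simp [Rm, hjm_zero _ this]
    rw [this.deriv_eq]; simp
  have f1 : ∀ x < -2 * S, deriv (deriv (Rm jm S)) x = 0 := by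
    intro x hx
    have : deriv (Rm jm S) =ᶠ[nhds x] fun _ => 1 := by
      filter_upwards [Iio_mem_nhds hx] with y hy using e1 y hy
    rw [this.deriv_eq]; simp
  have f2 : ∀ x > -(3 / 2) * S, deriv (deriv (Rm jm S)) x = 0 := by
    intro x hx
    have : deriv (Rm jm S) =ᶠ[nhds x] fun _ => 0 := by
      filter_upwards [Ioi_mem_nhds hx] with y hy using e2 y hy
    rw [this.deriv_eq]; simp
  obtain ⟨L1, h1⟩ := isCompact_Icc.exists_bound_of_continuousOn (s := Set.Icc (-2 * S) (-(3 / 2) * S)) c1.continuousOn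
  obtain ⟨L2, h2⟩ := isCompact_Icc.exists_bound_of_continuousOn (s := Set.Icc (-2 * S) (-(3 / 2) * S)) c2.continuousOn
  refine ⟨max L1 1, max L2 0, fun x => ?_⟩
  rcases lt_or_ge x (-2 * S) with hx | hx
  · rw [e1 x hx, f1 x hx]; simp
  rcases lt_or_ge (-(3 / 2) * S) x with hx' | hx'
  · rw [e2 x hx', f2 x hx']; simp
  exact ⟨(h1 x ⟨hx, hx'⟩).trans (le_max_left _ _), (h2 x ⟨hx, hx'⟩).trans (le_max_left _ _)⟩

lemma Rm_le {jm : ℝ → ℝ} {S : ℝ} (hS : 1 ≤ S)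
    (hjm_range : ∀ t : ℝ, jm t ∈ Set.Icc (0 : ℝ) 1)
    (hjm_zero : ∀ t : ℝ, -(3 / 2 : ℝ) ≤ t → jm t = 0) {x F C : ℝ} (hC : 0 ≤ C)
    (hF : x ≤ -(3 / 2 : ℝ) → |x * F| ≤ C) : |Rm jm S x * F| ≤ C := by
  have S0 : 0 < S := by linarith
  rcases lt_or_ge (-(3 / 2)) x with hx | hx
  · have : -(3 / 2) ≤ x / S := by rw [le_div_iff₀ S0]; nlinarith
    simpa [Rm, hjm_zero _ this] using hC
  · refine le_trans ?_ (hF hx)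
    have ⟨r0, r1⟩ := hjm_range (x / S)
    rw [Rm, mul_assoc, abs_mul]
    have : |jm (x / S) ^ 2| ≤ 1 := by
      rw [abs_pow, abs_of_nonneg r0]; exact pow_le_one₀ r0 r1
    exact mul_le_of_le_one_left (abs_nonneg _) this

lemma final_sqrt {I J K A : ℝ} (hJ : 0 ≤ J) (hK : 0 ≤ K) (hA : 0 ≤ A) (h : I ≤ A ^ 2 * (J + K)) :
    √I ≤ A * (√J + √K) := by
  apply Real.sqrt_le_iff.2
  refine ⟨by positivity, h.trans ?_⟩
  rw [mul_pow]
  refine mul_le_mul_of_nonneg_left ?_ (by positivity)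
  have := Real.sq_sqrt hJ
  have := Real.sq_sqrt hK
  have : 0 ≤ √J * √K := by positivity
  nlinarith

lemma L2_of_pointwise {Γ1 Γ2 : Matrix (Fin 4) (Fin 4) ℂ}
    (h1 : Γ1.IsHermitian) (h2 : Γ2.IsHermitian)
    (s1 : Γ1 * Γ1 = 1) (s2 : Γ2 * Γ2 = 1)
    (ac : Γ1 * Γ2 + Γ2 * Γ1 = 0)
    {g : ℝ → ℝ} (hg : ContDiff ℝ (⊤ : ℕ∞) g) {Cb : ℝ} (hgb : ∀ x : ℝ, |g x| ≤ Cb)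
    {Cg : ℝ} (hCg : 0 < Cg) (hg' : ∀ x : ℝ, |deriv g x| ≤ Cg * |g x|)
    {f : ℝ → ℝ} (hf : ContDiff ℝ (⊤ : ℕ∞) f)
    {Mf : ℝ} (hfb : ∀ x : ℝ, |f x| ≤ Mf) {lam : ℝ} (hl : 1 ≤ lam) (u : SchwartzMap ℝ V4)
    {K : ℝ} (hK : 0 ≤ K) (B : ℝ → V4)
    (hB : ∀ x, ‖B x‖ ≤ K * (‖deriv u x‖ + lam * |g x| * ‖u x‖ + ‖u x‖)) :
    L2norm B ≤ (3 * K * (4 + 4 * Mf ^ 2 + Cg ^ 2)) *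
      (L2norm (H0op Γ1 Γ2 g f lam u) + L2norm u) := by
  have en := energy Γ1 Γ2 h1 h2 s1 s2 ac hg hgb hCg hg' hf hfb hl u
  have iu := schw_int u
  have iu' := schw_int' u
  have ig2 : Integrable (fun x => g x ^ 2 * ‖u x‖ ^ 2) :=
    schw_int_g u (hg.continuous.pow 2) (Cb := Cb ^ 2) (fun x => by
      rw [abs_pow]; exact pow_le_pow_left₀ (abs_nonneg _) (hgb x) 2)
  have ig2l := ig2.const_mul (lam ^ 2)
  have j1 : Integrable (fun x => ‖deriv u x‖ ^ 2 + lam ^ 2 * (g x ^ 2 * ‖u x‖ ^ 2)) := iu'.add ig2l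
  have j2 : Integrable (fun x => ‖deriv u x‖ ^ 2 + lam ^ 2 * (g x ^ 2 * ‖u x‖ ^ 2) + ‖u x‖ ^ 2) := j1.add iu
  have m : ∫ x, ‖B x‖ ^ 2 ≤ ∫ x, 3 * K ^ 2 * (‖deriv u x‖ ^ 2 + lam ^ 2 * (g x ^ 2 * ‖u x‖ ^ 2) + ‖u x‖ ^ 2) := by
    have nn : ∀ x, 0 ≤ ‖B x‖ ^ 2 := fun x => sq_nonneg _
    refine integral_mono_of_nonneg (Filter.Eventually.of_forall nn) (j2.const_mul _)
      (Filter.Eventually.of_forall fun x => ?_)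
    simp only
    have b := pow_le_pow_left₀ (norm_nonneg _) (hB x) 2
    refine b.trans ?_
    rw [mul_pow, mul_comm (3 : ℝ), mul_assoc (K ^ 2) (3 : ℝ)]
    refine mul_le_mul_of_nonneg_left ?_ (sq_nonneg K)
    have e : lam ^ 2 * (g x ^ 2 * ‖u x‖ ^ 2) = (lam * |g x| * ‖u x‖) ^ 2 := by
      rw [mul_pow, mul_pow, sq_abs]; ring
    rw [e]
    generalize lam * |g x| * ‖u x‖ = t
    nlinarith [sq_nonneg (‖deriv u x‖ - t), sq_nonneg (‖deriv u x‖ - ‖u x‖), sq_nonneg (t - ‖u x‖)]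
  rw [integral_const_mul, integral_add j1 iu, integral_add iu' ig2l] at m
  have pJ : 0 ≤ ∫ x, ‖H0op Γ1 Γ2 g f lam u x‖ ^ 2 := integral_nonneg fun x => by positivity
  have pK : 0 ≤ ∫ x, ‖u x‖ ^ 2 := integral_nonneg fun x => by positivity
  unfold L2norm
  refine final_sqrt pJ pK (by positivity) (m.trans ?_)
  generalize (∫ x, ‖H0op Γ1 Γ2 g f lam u x‖ ^ 2) = J at *
  generalize (∫ x, ‖u x‖ ^ 2) = Q at *
  have q1 : 3 * K ^ 2 * ((∫ x, ‖deriv u x‖ ^ 2) + (∫ x, lam ^ 2 * (g x ^ 2 * ‖u x‖ ^ 2)) + Q) ≤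
      3 * K ^ 2 * ((4 + 4 * Mf ^ 2 + Cg ^ 2) * (J + Q)) := by
    refine mul_le_mul_of_nonneg_left ?_ (by positivity)
    have : 0 ≤ (4 * Mf ^ 2 + Cg ^ 2) * J := by positivity
    nlinarith
  refine q1.trans ?_
  set X := 4 + 4 * Mf ^ 2 + Cg ^ 2 with hX
  have hX1 : 1 ≤ X := by rw [hX]; nlinarith [sq_nonneg Mf, sq_nonneg Cg]
  have : X ≤ 3 * X ^ 2 := by nlinarith
  have := mul_le_mul_of_nonneg_left this (by positivity : 0 ≤ 3 * K ^ 2 * (J + Q))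
  nlinarith

/-- for the perturbed Hamiltonian `H = hH₀h + V`, the operator `B` coincides
with the commutator `[H, A₋] = HA₋ − A₋H` on Schwartz functions, and `B` is bounded by the
graph norm of `H₀` uniformly in `λ ≥ 1`. -/
theorem commutator_H_Aminus_bounded
    (Γ1 Γ2 : Matrix (Fin 4) (Fin 4) ℂ)
    (hΓ1_herm : Γ1.IsHermitian) (hΓ2_herm : Γ2.IsHermitian)
    (hΓ1_sq : Γ1 * Γ1 = 1) (hΓ2_sq : Γ2 * Γ2 = 1)
    (hanticomm : Γ1 * Γ2 + Γ2 * Γ1 = 0)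
    (g : ℝ → ℝ) (hg_smooth : ContDiff ℝ (⊤ : ℕ∞) g) (Cb : ℝ) (hg_bdd : ∀ x : ℝ, |g x| ≤ Cb)
    (Cg : ℝ) (hCg : 0 < Cg) (hg' : ∀ x : ℝ, |deriv g x| ≤ Cg * |g x|)
    (f : ℝ → ℝ) (hf_smooth : ContDiff ℝ (⊤ : ℕ∞) f)
    (Mf : ℝ) (hf_bdd : ∀ x : ℝ, |f x| ≤ Mf)
    (Mf' : ℝ) (hf'_bdd : ∀ x : ℝ, |deriv f x| ≤ Mf')
    (S : ℝ) (hS : 1 ≤ S)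
    (jm : ℝ → ℝ) (hjm_smooth : ContDiff ℝ (⊤ : ℕ∞) jm)
    (hjm_range : ∀ t : ℝ, jm t ∈ Set.Icc (0 : ℝ) 1)
    (hjm_one : ∀ t : ℝ, t ≤ -2 → jm t = 1)
    (hjm_zero : ∀ t : ℝ, -(3 / 2 : ℝ) ≤ t → jm t = 0)
    (C2 : ℝ) (hC2 : 0 < C2)
    (hxg' : ∀ x : ℝ, x ≤ -(3 / 2 : ℝ) → |x * deriv g x| ≤ C2 * |g x|)
    (C3 : ℝ) (hC3 : 0 < C3)
    (hxf' : ∀ x : ℝ, x ≤ -(3 / 2 : ℝ) → |x * deriv f x| ≤ C3)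
    (h : ℝ → ℝ) (hh_smooth : ContDiff ℝ (⊤ : ℕ∞) h) (hh_pos : ∀ x : ℝ, 0 < h x)
    (Ch : ℝ) (hh_bdd : ∀ x : ℝ, |h x| ≤ Ch)
    (Chinv : ℝ) (hhinv_bdd : ∀ x : ℝ, |1 / h x| ≤ Chinv)
    (Ch' : ℝ) (hh'_bdd : ∀ x : ℝ, |deriv h x| ≤ Ch')
    (Ch'' : ℝ) (hh''_bdd : ∀ x : ℝ, |deriv (deriv h) x| ≤ Ch'')
    (C6 : ℝ) (hxh' : ∀ x : ℝ, x ≤ -(3 / 2 : ℝ) → |x * deriv h x| ≤ C6)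
    (C7 : ℝ) (hx2h'' : ∀ x : ℝ, x ≤ -(3 / 2 : ℝ) → |x ^ 2 * deriv (deriv h) x| ≤ C7)
    (V : ℝ → Matrix (Fin 4) (Fin 4) ℂ) (hV_herm : ∀ x : ℝ, (V x).IsHermitian)
    (hV_C1 : ContDiff ℝ 1 fun x => Mop (V x))
    (CV : ℝ) (hV_bdd : ∀ x : ℝ, ‖Mop (V x)‖ ≤ CV)
    (C8 : ℝ)
    (hxV' : ∀ x : ℝ, x ≤ -(3 / 2 : ℝ) → |x| * ‖deriv (fun y => Mop (V y)) x‖ ≤ C8) :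
    (∀ (lam : ℝ), 1 ≤ lam → ∀ (u : SchwartzMap ℝ V4) (x : ℝ),
      Bop Γ1 Γ2 g f lam h V jm S ⇑u x =
        Hop Γ1 Γ2 g f lam h V (Amop jm S ⇑u) x
          - Amop jm S (Hop Γ1 Γ2 g f lam h V ⇑u) x) ∧
    ∃ c : ℝ, 0 < c ∧ ∀ (lam : ℝ), 1 ≤ lam → ∀ u : SchwartzMap ℝ V4,
      L2norm (Bop Γ1 Γ2 g f lam h V jm S ⇑u) ≤
        c * (L2norm (H0op Γ1 Γ2 g f lam ⇑u) + L2norm ⇑u) := by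
  refine ⟨fun lam _ u x => comm_eq Γ1 Γ2 hg_smooth hf_smooth hh_smooth V hV_C1 hjm_smooth S lam u x, ?_⟩
  obtain ⟨K1, K2, hK⟩ := Rm_bounds hjm_smooth hS hjm_one hjm_zero
  have n1 := Mop_norm hΓ1_herm hΓ1_sq
  have n2 := Mop_norm hΓ2_herm hΓ2_sq
  have K1p := (abs_nonneg _).trans (hK 0).1
  have K2p := (abs_nonneg _).trans (hK 0).2
  have hMf : 0 ≤ Mf := (abs_nonneg _).trans (hf_bdd 0)
  have hChp : 0 ≤ Ch := (abs_nonneg _).trans (hh_bdd 0)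
  have hCh'p : 0 ≤ Ch' := (abs_nonneg _).trans (hh'_bdd 0)
  have r1 : ∀ x, |Rm jm S x * deriv g x| ≤ C2 * |g x| := fun x =>
    Rm_le hS hjm_range hjm_zero (by positivity) (hxg' x)
  have r2 : ∀ x, |Rm jm S x * deriv f x| ≤ C3 := fun x =>
    Rm_le hS hjm_range hjm_zero hC3.le (hxf' x)
  have r3 : ∀ x, |Rm jm S x * deriv h x| ≤ |C6| := fun x =>
    Rm_le hS hjm_range hjm_zero (abs_nonneg _) (fun hx => (hxh' x hx).trans (le_abs_self _))
  have r4 : ∀ x, |Rm jm S x * deriv (deriv h) x| ≤ |C7| := fun x =>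
    Rm_le hS hjm_range hjm_zero (abs_nonneg _) (fun hx => by
      refine le_trans ?_ ((hx2h'' x hx).trans (le_abs_self _))
      rw [abs_mul, abs_mul, abs_pow]
      have : 1 ≤ |x| := by rw [abs_of_neg (by linarith)]; linarith
      refine mul_le_mul_of_nonneg_right ?_ (abs_nonneg _)
      nlinarith)
  have r5 : ∀ x, |Rm jm S x * ‖deriv (fun y => Mop (V y)) x‖| ≤ |C8| := fun x =>
    Rm_le hS hjm_range hjm_zero (abs_nonneg _) (fun hx => by
      rw [abs_mul, abs_norm]
      exact (hxV' x hx).trans (le_abs_self _))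
  set k1 := K1 * (Ch + Ch') + K2 * Ch + C2 * Ch + C3 * Ch with hk1
  set k2 := |C6| + (K1 * Ch' + |C7|) + Mf * |C6| with hk2
  set k3 := Ch + Ch' + Mf * Ch with hk3
  set K := Ch * k1 + Ch * k2 + |C6| * k3 + |C8| + 1 with hKdef
  have Kp : 0 < K := by positivity
  refine ⟨3 * K * (4 + 4 * Mf ^ 2 + Cg ^ 2), by positivity, fun lam hl u => ?_⟩
  refine L2_of_pointwise hΓ1_herm hΓ2_herm hΓ1_sq hΓ2_sq hanticomm hg_smooth hg_bdd hCg hg'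
    hf_smooth hf_bdd hl u Kp.le _ fun x => ?_
  have hd := smooth_hd hh_smooth x
  have hd2 := smooth_hd (smooth_deriv hh_smooth) x
  have Rd := smooth_hd (Rm_smooth hjm_smooth S) x
  have ud := schw_hd u x
  have hu : HasDerivAt (fun y => h y • u y) (h x • deriv u x + deriv h x • u x) x := hd.smul ud
  have hRu : HasDerivAt (fun y => (Rm jm S y * deriv h y) • u y)
      ((Rm jm S x * deriv h x) • deriv u x +
        (deriv (Rm jm S) x * deriv h x + Rm jm S x * deriv (deriv h) x) • u x) x :=
    (Rd.mul hd2).smul ud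
  have sm : ∀ {t c : ℝ} (v : V4), |t| ≤ c → ‖t • v‖ ≤ c * ‖v‖ := fun v ht => by
    rw [norm_smul, Real.norm_eq_abs]
    exact mul_le_mul_of_nonneg_right ht (norm_nonneg _)
  have w0 : ‖h x • u x‖ ≤ Ch * ‖u x‖ := sm _ (hh_bdd x)
  have w1 : ‖h x • deriv u x + deriv h x • u x‖ ≤ Ch * ‖deriv u x‖ + Ch' * ‖u x‖ :=
    (norm_add_le _ _).trans (add_le_add (sm _ (hh_bdd x)) (sm _ (hh'_bdd x)))
  have v0 : ‖(Rm jm S x * deriv h x) • u x‖ ≤ |C6| * ‖u x‖ := sm _ (r3 x)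
  have v1 : ‖(Rm jm S x * deriv h x) • deriv u x +
        (deriv (Rm jm S) x * deriv h x + Rm jm S x * deriv (deriv h) x) • u x‖ ≤
      |C6| * ‖deriv u x‖ + (K1 * Ch' + |C7|) * ‖u x‖ := by
    refine (norm_add_le _ _).trans (add_le_add (sm _ (r3 x)) (sm _ ?_))
    refine (abs_add_le _ _).trans (add_le_add ?_ (r4 x))
    rw [abs_mul]
    exact mul_le_mul (hK x).1 (hh'_bdd x) (abs_nonneg _) K1p
  have B1 := comm_bound n1 n2 hl (hK x).1 (hK x).2 hC2 (r1 x) (r2 x) hu hChp hCh'p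
    (norm_nonneg (deriv u x)) (norm_nonneg (u x)) w0 w1
  have B2 := H0_bound n1 n2 (g := g) hf_bdd hl hRu (abs_nonneg C6) (by positivity)
    (norm_nonneg (deriv u x)) (norm_nonneg (u x)) v0 v1
  have B3 := H0_bound n1 n2 (g := g) hf_bdd hl hu hChp hCh'p
    (norm_nonneg (deriv u x)) (norm_nonneg (u x)) w0 w1
  have hGq : 0 ≤ lam * |g x| * ‖u x‖ := by positivity
  have hN : ‖u x‖ ≤ ‖deriv u x‖ + lam * |g x| * ‖u x‖ + ‖u x‖ := by
    have := norm_nonneg (deriv u x)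
    linarith
  have hN0 := (norm_nonneg (u x)).trans hN
  rw [← hk1] at B1
  rw [← hk2] at B2
  rw [← hk3] at B3
  generalize ‖deriv u x‖ + lam * |g x| * ‖u x‖ + ‖u x‖ = N at *
  unfold Bop
  have tri : ∀ A B C D : V4, ‖A + B + C + D‖ ≤ ‖A‖ + ‖B‖ + ‖C‖ + ‖D‖ := fun A B C D => by
    have := norm_add_le (A + B + C) D
    have := norm_add_le (A + B) C
    have := norm_add_le A B
    linarith
  refine (tri _ _ _ _).trans ?_
  simp only [norm_smul, norm_mul, Complex.norm_I, one_mul, Complex.norm_real, Real.norm_eq_abs]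
  have T1 := mul_le_mul (hh_bdd x) B1 (norm_nonneg _) hChp
  have T2 := mul_le_mul (hh_bdd x) B2 (norm_nonneg _) hChp
  have T3 := mul_le_mul (r3 x) B3 (norm_nonneg _) (abs_nonneg C6)
  have T4 : |Rm jm S x| * ‖(deriv (fun y => Mop (V y)) x) (u x)‖ ≤ |C8| * N := by
    have a1 := ContinuousLinearMap.le_opNorm (deriv (fun y => Mop (V y)) x) (u x)
    have a2 := r5 x
    rw [abs_mul, abs_norm] at a2
    calc _ ≤ |Rm jm S x| * (‖deriv (fun y => Mop (V y)) x‖ * ‖u x‖) := by gcongr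
      _ = (|Rm jm S x| * ‖deriv (fun y => Mop (V y)) x‖) * ‖u x‖ := by ring
      _ ≤ _ := mul_le_mul a2 hN (norm_nonneg _) (abs_nonneg _)
  rw [abs_mul] at T3
  rw [hKdef]
  linarith
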